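/- In dimension d ≥ 4, nonempty intersections of two wedges are unbounded: if W₁ = Λ₁(W_R) + a₁ and W₂ = Λ₂(W_R) + a₂ are wedges in ℝ^d with d ≥ 4 and W₁ ∩ W₂ ≠ ∅, then W₁ ∩ W₂ is not a bounded set. -/

import Mathlib

/-- The Minkowski inner product on `ℝ^(d+4)`:
`⟨x,y⟩ = x₀y₀ - x₁y₁ - ⋯ = 2 x₀ y₀ - ∑ᵢ xᵢ yᵢ`. -/
noncomputable def mink {d : ℕ} (x y : Fin (d + 4) → ℝ) : ℝ :=
  2 * x 0 * y 0 - ∑ i, x i * y i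

/-- The right wedge `W_R = {x : x₁ > |x₀|}` in `ℝ^(d+4)`. -/
def WR {d : ℕ} : Set (Fin (d + 4) → ℝ) := {x | |x 0| < x 1}

/-- Some nonzero vector is nonnegative on all four functionals bounding the two wedges. -/
lemma exists_recession (d : ℕ) (A B : (Fin (d + 4) → ℝ) →ₗ[ℝ] (Fin (d + 4) → ℝ)) :
    ∃ v : Fin (d + 4) → ℝ, v ≠ 0 ∧ |A v 0| ≤ A v 1 ∧ |B v 0| ≤ B v 1 := by
  let P (i : Fin (d + 4)) : (Fin (d + 4) → ℝ) →ₗ[ℝ] ℝ := LinearMap.proj i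
  let F : (Fin (d + 4) → ℝ) →ₗ[ℝ] (Fin 4 → ℝ) := LinearMap.pi
    ![(P 1 - P 0) ∘ₗ A, (P 1 + P 0) ∘ₗ A, (P 1 - P 0) ∘ₗ B, (P 1 + P 0) ∘ₗ B]
  have key : ∀ v : Fin (d + 4) → ℝ, (∀ i, 0 ≤ F v i) →
      |A v 0| ≤ A v 1 ∧ |B v 0| ≤ B v 1 := by
    intro v h
    have h0 := h 0
    have h1 := h 1
    have h2 := h 2
    have h3 := h 3
    simp [F, P] at h0 h1 h2 h3
    exact ⟨abs_le.2 ⟨by linarith, by linarith⟩, abs_le.2 ⟨by linarith, by linarith⟩⟩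
  by_cases hF : Function.Injective F
  · have hle := LinearMap.finrank_le_finrank_of_injective hF
    simp at hle
    have hs : Function.Surjective F :=
      (LinearMap.injective_iff_surjective_of_finrank_eq_finrank (by simp [hle])).1 hF
    obtain ⟨v, hv⟩ := hs (fun _ => 1)
    refine ⟨v, ?_, key v fun i => by simp [hv]⟩
    rintro rfl
    have := congrFun hv 0
    simp at this
  · rw [injective_iff_map_eq_zero] at hF
    push Not at hF
    obtain ⟨v, hv, hv0⟩ := hF
    exact ⟨v, hv0, key v fun i => by simp [hv]⟩

lemma mem_wedge {d : ℕ} (e : (Fin (d + 4) → ℝ) ≃ₗ[ℝ] (Fin (d + 4) → ℝ))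
    (a p v : Fin (d + 4) → ℝ) (hp : p ∈ (fun w => e w + a) '' WR)
    (hv : |e.symm v 0| ≤ e.symm v 1) (t : ℝ) (ht : 0 ≤ t) :
    p + t • v ∈ (fun w => e w + a) '' WR := by
  obtain ⟨w, hw, rfl⟩ := hp
  refine ⟨w + t • e.symm v, ?_, ?_⟩
  · simp only [WR, Set.mem_setOf_eq, Pi.add_apply, Pi.smul_apply, smul_eq_mul] at hw ⊢
    have h1 := abs_add_le (w 0) (t * e.symm v 0)
    rw [abs_mul, abs_of_nonneg ht] at h1
    have h2 := mul_le_mul_of_nonneg_left hv ht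
    linarith
  · simp [map_add, map_smul]
    abel

/-- in dimension `d ≥ 4`, nonempty intersections of two wedges are unbounded:
if `W₁ = Λ₁(W_R) + a₁` and `W₂ = Λ₂(W_R) + a₂` are wedges with `W₁ ∩ W₂ ≠ ∅`, then `W₁ ∩ W₂`
is not a bounded set. -/
theorem wedge_intersection_unbounded (d : ℕ)
    (Λ₁ Λ₂ : (Fin (d + 4) → ℝ) →ₗ[ℝ] (Fin (d + 4) → ℝ))
    (h₁bij : Function.Bijective Λ₁)
    (h₁mink : ∀ x y, mink (Λ₁ x) (Λ₁ y) = mink x y)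
    (h₁det : LinearMap.det Λ₁ = 1)
    (h₂bij : Function.Bijective Λ₂)
    (h₂mink : ∀ x y, mink (Λ₂ x) (Λ₂ y) = mink x y)
    (h₂det : LinearMap.det Λ₂ = 1)
    (a₁ a₂ : Fin (d + 4) → ℝ)
    (hne : (((fun w => Λ₁ w + a₁) '' WR) ∩ ((fun w => Λ₂ w + a₂) '' WR)).Nonempty) :
    ¬ Bornology.IsBounded (((fun w => Λ₁ w + a₁) '' WR) ∩ ((fun w => Λ₂ w + a₂) '' WR)) := by
  intro hb
  let e₁ := LinearEquiv.ofBijective Λ₁ h₁bij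
  let e₂ := LinearEquiv.ofBijective Λ₂ h₂bij
  obtain ⟨v, hv0, hA, hB⟩ := exists_recession d e₁.symm.toLinearMap e₂.symm.toLinearMap
  obtain ⟨p, hp1, hp2⟩ := hne
  obtain ⟨C, hC⟩ := hb.exists_norm_le
  have hvn : 0 < ‖v‖ := norm_pos_iff.2 hv0
  have hmem : ∀ t : ℝ, 0 ≤ t → ‖p + t • v‖ ≤ C := fun t ht =>
    hC _ ⟨mem_wedge e₁ a₁ p v hp1 hA t ht, mem_wedge e₂ a₂ p v hp2 hB t ht⟩
  have hp : ‖p‖ ≤ C := by simpa using hmem 0 le_rfl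
  have hC0 : 0 ≤ C := (norm_nonneg p).trans hp
  have ht : 0 ≤ (2 * C + 1) / ‖v‖ := by positivity
  have h := hmem _ ht
  have h3 : ‖((2 * C + 1) / ‖v‖) • v‖ = 2 * C + 1 := by
    rw [norm_smul, Real.norm_of_nonneg ht]
    field_simp
  have h4 := norm_sub_le (p + ((2 * C + 1) / ‖v‖) • v) p
  rw [add_sub_cancel_left, h3] at h4
  linarith
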